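/- Let A, B, C be separated cocomplete V-categories and g : A ⊗ B → C a bimorphism. Define f : A ⊗_V B → C by f(ξ) := sup_C(c ↦ ⨆_{a,b} ξ(a,b) ⊗ C(c, g(a,b))). Then: (i) C(f(ξ), c) = ⨅_{a,b} [ξ(a,b), C(g(a,b), c)] for every G-ideal ξ and every c ∈ C, so f is left adjoint to the map c ↦ C(g(·,·), c) : C → A ⊗_V B and in particular f is a cocontinuous V-functor; (ii) f(i(a,b)) = g(a,b) for all (a,b) ∈ A × B, where i(a,b) is the least G-ideal above the representable presheaf (x,y) ↦ A(x,a) ⊗ B(y,b). Hence the universal bimorphism theorem: precomposition with i : A ⊗ B → A ⊗_V B is a bijection between cocontinuous V-functors A ⊗_V B → C and bimorphisms A ⊗ B → C. -/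

import Mathlib

/-!
Everything rests on a Yoneda-type lemma for the universal map `i`: if `ζ` is a G-ideal, then
`(A ⊗_V B)(i(a,b), ζ) = ζ(a,b)` (`tHom_iTensor`). The inequality `≤` holds because
`1 ≤ i(a,b)(a,b)`. For `≥`, put `v = ζ(a,b)`: the cotensor `[v, ζ]` is again a G-ideal and lies
above the representable presheaf at `(a,b)`, hence above `i(a,b)`.

For a bimorphism `g`, each `C(g(·,·), c)` is a G-ideal (`isGIdeal_of_isBimorphism`). Formula (i)
unfolds the supremum defining `f`, and by (i) and the Yoneda lemma `f(i(a,b))` and `g(a,b)` have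
the same homs into every `c`, so they agree by separatedness. If `F` is left adjoint to `H`, the
Yoneda lemma gives `C(F(i(a,b)), c) = H(c)(a,b)`. The G-ideal property of `H(c)`, tested against
a presheaf in one variable and a representable one in the other, therefore makes `F ∘ i` a
bimorphism; and if `F ∘ i = g`, then `H(c) = C(g(·,·), c)`, so `F` and `f` are left adjoint to the
same map and coincide.
-/

/- `V` is a commutative quantale: a complete lattice with a commutative monoid
structure `(*, 1)` distributing over arbitrary suprema. -/
variable {V : Type*} [CommMonoid V] [CompleteLattice V] [IsQuantale V]

/-- The internal hom `[v,w]` of the commutative quantale `V`. -/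
def qhom (v w : V) : V := sSup {u | u * v ≤ w}

/-- A separated cocomplete `V`-category: a `V`-category whose underlying order is
antisymmetric, equipped with `sup : DA → A` satisfying
`A(sup φ, a) = ⨅ a', [φ(a'), A(a',a)]`. -/
structure SupCat (V : Type*) [CommMonoid V] [CompleteLattice V] [IsQuantale V] where
  carrier : Type*
  hom : carrier → carrier → V
  refl : ∀ x, 1 ≤ hom x x
  trans : ∀ x y z, hom x y * hom y z ≤ hom x z
  separated : ∀ x y, 1 ≤ hom x y → 1 ≤ hom y x → x = y
  sup : {φ : carrier → V // ∀ x y, hom x y * φ y ≤ φ x} → carrier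
  hom_sup : ∀ (φ : {φ : carrier → V // ∀ x y, hom x y * φ y ≤ φ x}) (a : carrier),
      hom (sup φ) a = ⨅ a', qhom (φ.1 a') (hom a' a)

/-- The set of contravariant presheaves on a separated cocomplete `V`-category. -/
abbrev PSh (A : SupCat V) := {φ : A.carrier → V // ∀ x y, A.hom x y * φ y ≤ φ x}

/-- A G-ideal on `A ⊗ B`: a presheaf `ξ` on the tensor product `V`-category `A ⊗ B`
such that `⨅_{a,b} [φ(a) ⊗ ψ(b), ξ(a,b)] = ξ(sup_A φ, sup_B ψ)` for all presheaves
`φ` on `A` and `ψ` on `B`. -/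
def IsGIdeal (A B : SupCat V) (ξ : A.carrier → B.carrier → V) : Prop :=
  (∀ a a' b b', A.hom a a' * B.hom b b' * ξ a' b' ≤ ξ a b) ∧
  (∀ (φ : PSh A) (ψ : PSh B),
      (⨅ a, ⨅ b, qhom (φ.1 a * ψ.1 b) (ξ a b)) = ξ (A.sup φ) (B.sup ψ))

/-- The pointwise infimum of all G-ideals above `θ` (the reflection of `θ`
into the tensor product `A ⊗_V B`). -/
def qRefl (A B : SupCat V) (θ : A.carrier → B.carrier → V) :
    A.carrier → B.carrier → V :=
  fun a b => ⨅ ζ ∈ {ζ : A.carrier → B.carrier → V |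
      IsGIdeal A B ζ ∧ ∀ a' b', θ a' b' ≤ ζ a' b'}, ζ a b

/-- The tensor product `A ⊗_V B`: the set of all G-ideals on `A ⊗ B`. -/
def GIdT (A B : SupCat V) := {ξ : A.carrier → B.carrier → V // IsGIdeal A B ξ}

/-- The hom of the `V`-category `A ⊗_V B`. -/
def tHom (A B : SupCat V) (ξ ζ : GIdT A B) : V :=
  ⨅ a, ⨅ b, qhom (ξ.1 a b) (ζ.1 a b)

/-- The universal map `i : A ⊗ B → A ⊗_V B`: the least G-ideal above the
representable presheaf at `(a₀, b₀)`. -/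
def iTensor (A B : SupCat V) (a₀ : A.carrier) (b₀ : B.carrier) :
    A.carrier → B.carrier → V :=
  qRefl A B (fun a b => A.hom a a₀ * B.hom b b₀)

/-- A bimorphism `g : A ⊗ B → C`: a `V`-functor that is cocontinuous in each
variable separately. -/
def IsBimorphism (A B C : SupCat V) (g : A.carrier → B.carrier → C.carrier) : Prop :=
  (∀ a a' b b', A.hom a a' * B.hom b b' ≤ C.hom (g a b) (g a' b')) ∧
  (∀ (φ : PSh A) (b : B.carrier) (c : C.carrier),
      C.hom (g (A.sup φ) b) c = ⨅ a, qhom (φ.1 a) (C.hom (g a b) c)) ∧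
  (∀ (a : A.carrier) (ψ : PSh B) (c : C.carrier),
      C.hom (g a (B.sup ψ)) c = ⨅ b, qhom (ψ.1 b) (C.hom (g a b) c))

/-! ### The internal hom of a commutative quantale -/

theorem le_qhom_iff {u v w : V} : u ≤ qhom v w ↔ u * v ≤ w := by
  constructor
  · intro h
    refine (mul_le_mul_left h v).trans ?_
    rw [qhom, IsQuantale.sSup_mul_distrib]
    exact iSup₂_le fun _ hu => hu
  · exact fun h => le_sSup h

theorem qhom_mul_le (v w : V) : qhom v w * v ≤ w := le_qhom_iff.1 le_rfl

theorem qhom_iInf {ι : Sort*} (v : V) (w : ι → V) : qhom v (⨅ i, w i) = ⨅ i, qhom v (w i) :=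
  eq_of_forall_le_iff fun u => by simp only [le_iInf_iff, le_qhom_iff]

theorem qhom_mul (u v w : V) : qhom (u * v) w = qhom u (qhom v w) :=
  eq_of_forall_le_iff fun x => by simp only [le_qhom_iff, mul_assoc]

theorem qhom_comm (u v w : V) : qhom u (qhom v w) = qhom v (qhom u w) := by
  rw [← qhom_mul, mul_comm, qhom_mul]

theorem iSup_mul_le_iff {ι : Sort*} {s : ι → V} {v w : V} :
    (⨆ i, s i) * v ≤ w ↔ ∀ i, s i * v ≤ w := by
  simp only [← le_qhom_iff, iSup_le_iff]

theorem mul_iSup_le_iff {ι : Sort*} {s : ι → V} {v w : V} :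
    v * (⨆ i, s i) ≤ w ↔ ∀ i, v * s i ≤ w := by
  simp only [mul_comm v, iSup_mul_le_iff]

/-! ### Separated cocomplete `V`-categories -/

/-- The representable presheaf `A(·, a)`. -/
def yo (A : SupCat V) (a : A.carrier) : PSh A :=
  ⟨fun x => A.hom x a, fun x y => A.trans x y a⟩

/-- The Yoneda lemma for presheaves on `A`: `DA(A(·,a), θ) = θ(a)`. -/
theorem iInf_qhom_hom (A : SupCat V) (θ : A.carrier → V)
    (hθ : ∀ x y, A.hom x y * θ y ≤ θ x) (a : A.carrier) :
    (⨅ x, qhom (A.hom x a) (θ x)) = θ a := by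
  apply le_antisymm
  · refine (iInf_le _ a).trans ?_
    calc qhom (A.hom a a) (θ a) = qhom (A.hom a a) (θ a) * 1 := (mul_one _).symm
      _ ≤ qhom (A.hom a a) (θ a) * A.hom a a := mul_le_mul_right (A.refl a) _
      _ ≤ θ a := qhom_mul_le _ _
  · refine le_iInf fun x => le_qhom_iff.2 ?_
    rw [mul_comm]
    exact hθ x a

theorem eq_of_hom_eq (A : SupCat V) {x y : A.carrier} (h : ∀ c, A.hom x c = A.hom y c) :
    x = y :=
  A.separated x y (h y ▸ A.refl y) (h x ▸ A.refl x)

theorem sup_yo (A : SupCat V) (a : A.carrier) : A.sup (yo A a) = a := by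
  refine eq_of_hom_eq A fun c => ?_
  rw [A.hom_sup]
  exact iInf_qhom_hom A (fun x => A.hom x c) (fun x y => A.trans x y c) a

/-! ### G-ideals -/

theorem IsGIdeal.left {A B : SupCat V} {ξ : A.carrier → B.carrier → V} (h : IsGIdeal A B ξ)
    (b : B.carrier) (a a' : A.carrier) : A.hom a a' * ξ a' b ≤ ξ a b := by
  refine le_trans ?_ (h.1 a a' b b)
  refine mul_le_mul_left ?_ _
  calc A.hom a a' = A.hom a a' * 1 := (mul_one _).symm
    _ ≤ _ := mul_le_mul_right (B.refl b) _

theorem IsGIdeal.right {A B : SupCat V} {ξ : A.carrier → B.carrier → V} (h : IsGIdeal A B ξ)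
    (a : A.carrier) (b b' : B.carrier) : B.hom b b' * ξ a b' ≤ ξ a b := by
  refine le_trans ?_ (h.1 a a b b')
  refine mul_le_mul_left ?_ _
  calc B.hom b b' = 1 * B.hom b b' := (one_mul _).symm
    _ ≤ _ := mul_le_mul_left (A.refl a) _

/-- A G-ideal turns suprema in the first variable into weighted infima: its defining property
against the representable presheaf `B(·, b)`. -/
theorem IsGIdeal.sup_left {A B : SupCat V} {ξ : A.carrier → B.carrier → V}
    (h : IsGIdeal A B ξ) (φ : PSh A) (b : B.carrier) :
    ξ (A.sup φ) b = ⨅ a, qhom (φ.1 a) (ξ a b) := by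
  have h2 := h.2 φ (yo B b)
  rw [sup_yo] at h2
  rw [← h2]
  refine iInf_congr fun a => ?_
  simp only [qhom_mul, ← qhom_iInf]
  exact congrArg _ (iInf_qhom_hom B (fun y => ξ a y) (h.right a) b)

/-- The analogue of `IsGIdeal.sup_left` for the second variable. -/
theorem IsGIdeal.sup_right {A B : SupCat V} {ξ : A.carrier → B.carrier → V}
    (h : IsGIdeal A B ξ) (a : A.carrier) (ψ : PSh B) :
    ξ a (B.sup ψ) = ⨅ b, qhom (ψ.1 b) (ξ a b) := by
  have h2 := h.2 (yo A a) ψ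
  rw [sup_yo, iInf_comm] at h2
  rw [← h2]
  refine iInf_congr fun b => ?_
  simp only [mul_comm _ (ψ.1 b), qhom_mul, ← qhom_iInf]
  exact congrArg _ (iInf_qhom_hom A (fun x => ξ x b) (fun x y => h.left b x y) a)

theorem isGIdeal_iInf {A B : SupCat V} {ι : Sort*} (ζ : ι → A.carrier → B.carrier → V)
    (h : ∀ i, IsGIdeal A B (ζ i)) : IsGIdeal A B (fun a b => ⨅ i, ζ i a b) := by
  refine ⟨fun a a' b b' => le_iInf fun i => ?_, fun φ ψ => ?_⟩
  · exact (mul_le_mul_right (iInf_le _ i) _).trans ((h i).1 a a' b b')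
  · simp only [← (h _).2, qhom_iInf]
    refine eq_of_forall_le_iff fun u => ?_
    simp only [le_iInf_iff]
    exact ⟨fun hu i a b => hu a b i, fun hu a b i => hu i a b⟩

/-- G-ideals are closed under cotensors `[v, -]`. -/
theorem isGIdeal_qhom {A B : SupCat V} {ζ : A.carrier → B.carrier → V} (h : IsGIdeal A B ζ)
    (v : V) : IsGIdeal A B (fun a b => qhom v (ζ a b)) := by
  refine ⟨fun a a' b b' => le_qhom_iff.2 ?_, fun φ ψ => ?_⟩
  · rw [mul_assoc]
    exact (mul_le_mul_right (qhom_mul_le _ _) _).trans (h.1 a a' b b')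
  · simp only [← h.2, qhom_iInf]
    exact iInf_congr fun a => iInf_congr fun b => qhom_comm _ _ _

theorem isGIdeal_iTensor (A B : SupCat V) (a : A.carrier) (b : B.carrier) :
    IsGIdeal A B (iTensor A B a b) := by
  unfold iTensor qRefl
  simp only [iInf_subtype']
  exact isGIdeal_iInf _ fun ζ => ζ.2.1

/-- The Yoneda lemma for `i`: `(A ⊗_V B)(i(a₀,b₀), ζ) = ζ(a₀,b₀)` for every G-ideal `ζ`. -/
theorem tHom_iTensor {A B : SupCat V} (a₀ : A.carrier) (b₀ : B.carrier)
    {ζ : A.carrier → B.carrier → V} (h : IsGIdeal A B ζ) :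
    (⨅ a, ⨅ b, qhom (iTensor A B a₀ b₀ a b) (ζ a b)) = ζ a₀ b₀ := by
  apply le_antisymm
  · refine (iInf₂_le a₀ b₀).trans ?_
    have h1 : 1 ≤ iTensor A B a₀ b₀ a₀ b₀ :=
      le_iInf₂ fun θ hθ => le_trans (one_le_mul (A.refl a₀) (B.refl b₀)) (hθ.2 a₀ b₀)
    calc _ = qhom (iTensor A B a₀ b₀ a₀ b₀) (ζ a₀ b₀) * 1 := (mul_one _).symm
      _ ≤ _ := mul_le_mul_right h1 _
      _ ≤ ζ a₀ b₀ := qhom_mul_le _ _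
  · refine le_iInf₂ fun a b => le_qhom_iff.2 ?_
    rw [mul_comm, ← le_qhom_iff]
    -- The cotensor `[ζ(a₀,b₀), ζ]` is one of the G-ideals in the infimum defining `i(a₀,b₀)`.
    refine iInf₂_le (fun x y => qhom (ζ a₀ b₀) (ζ x y))
      ⟨isGIdeal_qhom h _, fun x y => le_qhom_iff.2 (h.1 x a₀ y b₀)⟩

theorem isGIdeal_of_isBimorphism {A B C : SupCat V} {g : A.carrier → B.carrier → C.carrier}
    (hg : IsBimorphism A B C g) (c : C.carrier) :
    IsGIdeal A B (fun a b => C.hom (g a b) c) := by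
  obtain ⟨hfun, hl, hr⟩ := hg
  refine ⟨fun a a' b b' => ?_, fun φ ψ => ?_⟩
  · exact (mul_le_mul_left (hfun a a' b b') _).trans (C.trans _ _ _)
  · simp only [hl, hr, qhom_iInf, qhom_mul]

/-- The `V`-functor property and bicontinuity of `k` can be read off from the presheaves
`C(k(·,·), c)` being G-ideals. -/
theorem isBimorphism_of_isGIdeal {A B C : SupCat V} {k : A.carrier → B.carrier → C.carrier}
    (hk : ∀ c, IsGIdeal A B (fun a b => C.hom (k a b) c)) : IsBimorphism A B C k := by
  refine ⟨fun a a' b b' => ?_, fun φ b c => (hk c).sup_left φ b, fun a ψ c => (hk c).sup_right a ψ⟩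
  refine le_trans ?_ ((hk (k a' b')).1 a a' b b')
  calc _ = A.hom a a' * B.hom b b' * 1 := (mul_one _).symm
    _ ≤ _ := mul_le_mul_right (C.refl _) _

/-- The supremum of the presheaf `c ↦ ⨆ ξ(a,b) ⊗ C(c, g(a,b))` is the `ξ`-weighted colimit
of `g`. -/
theorem hom_sup_weighted {α β : Type*} (C : SupCat V) (g : α → β → C.carrier) (ξ : α → β → V)
    (χ : PSh C) (hχ : χ.1 = fun c => ⨆ a, ⨆ b, ξ a b * C.hom c (g a b)) (c : C.carrier) :
    C.hom (C.sup χ) c = ⨅ a, ⨅ b, qhom (ξ a b) (C.hom (g a b) c) := by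
  have hpt : ∀ a b, (⨅ x, qhom (C.hom x (g a b)) (C.hom x c)) = C.hom (g a b) c := fun a b =>
    iInf_qhom_hom C (fun x => C.hom x c) (fun x y => C.trans x y c) (g a b)
  rw [C.hom_sup, hχ]
  refine eq_of_forall_le_iff fun u => ?_
  simp only [← hpt, qhom_iInf, ← qhom_mul, le_iInf_iff, le_qhom_iff, mul_iSup_le_iff]
  exact ⟨fun h a b x => h x a b, fun h x a b => h a b x⟩

theorem isPresheaf_weighted {α β : Type*} (C : SupCat V) (g : α → β → C.carrier)
    (ξ : α → β → V) (x y : C.carrier) :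
    C.hom x y * (⨆ a, ⨆ b, ξ a b * C.hom y (g a b)) ≤ ⨆ a, ⨆ b, ξ a b * C.hom x (g a b) := by
  simp only [mul_iSup_le_iff]
  intro a b
  rw [mul_left_comm]
  exact (mul_le_mul_right (C.trans x y _) _).trans
    (le_iSup₂ (f := fun a b => ξ a b * C.hom x (g a b)) a b)

/-! ### The universal bimorphism -/

/-- For a bimorphism `g : A ⊗ B → C`, the map
`f(ξ) := sup_C (c ↦ ⨆_{a,b} ξ(a,b) ⊗ C(c, g(a,b)))` satisfies
(i) `C(f(ξ), c) = ⨅_{a,b} [ξ(a,b), C(g(a,b), c)]` (so `f` is left adjoint to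
`c ↦ C(g(·,·), c)`, in particular cocontinuous) and (ii) `f ∘ i = g`.
Moreover (universal bimorphism theorem) precomposition with `i` is a bijection
between cocontinuous (= left adjoint) `V`-functors `A ⊗_V B → C` and bimorphisms
`A ⊗ B → C`: every left adjoint `F` restricts along `i` to a bimorphism, and `f`
is the unique left adjoint with `f ∘ i = g`. -/
theorem stmt9 (A B C : SupCat V) (g : A.carrier → B.carrier → C.carrier)
    (hg : IsBimorphism A B C g)
    (f : GIdT A B → C.carrier)
    (hf : ∀ (ξ : GIdT A B) (χ : PSh C),
        χ.1 = (fun c => ⨆ a, ⨆ b, ξ.1 a b * C.hom c (g a b)) → f ξ = C.sup χ) :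
    -- (i) f is left adjoint to c ↦ C(g(·,·), c)
    (∀ (ξ : GIdT A B) (c : C.carrier),
        C.hom (f ξ) c = ⨅ a, ⨅ b, qhom (ξ.1 a b) (C.hom (g a b) c)) ∧
    -- (ii) f ∘ i = g
    (∀ (a : A.carrier) (b : B.carrier) (ξ : GIdT A B),
        ξ.1 = iTensor A B a b → f ξ = g a b) ∧
    -- precomposing any left adjoint F : A ⊗_V B → C with i yields a bimorphism
    (∀ (F : GIdT A B → C.carrier) (H : C.carrier → GIdT A B),
        (∀ (ξ : GIdT A B) (c : C.carrier),
            C.hom (F ξ) c = ⨅ a, ⨅ b, qhom (ξ.1 a b) ((H c).1 a b)) →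
        ∀ k : A.carrier → B.carrier → C.carrier,
          (∀ (a : A.carrier) (b : B.carrier) (ξ : GIdT A B),
              ξ.1 = iTensor A B a b → k a b = F ξ) →
          IsBimorphism A B C k) ∧
    -- f is the unique left adjoint with f ∘ i = g
    (∀ (F : GIdT A B → C.carrier) (H : C.carrier → GIdT A B),
        (∀ (ξ : GIdT A B) (c : C.carrier),
            C.hom (F ξ) c = ⨅ a, ⨅ b, qhom (ξ.1 a b) ((H c).1 a b)) →
        (∀ (a : A.carrier) (b : B.carrier) (ξ : GIdT A B),
            ξ.1 = iTensor A B a b → F ξ = g a b) →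
        F = f) := by
  have h1 : ∀ (ξ : GIdT A B) (c : C.carrier),
      C.hom (f ξ) c = ⨅ a, ⨅ b, qhom (ξ.1 a b) (C.hom (g a b) c) := by
    intro ξ c
    rw [hf ξ ⟨_, isPresheaf_weighted C g ξ.1⟩ rfl]
    exact hom_sup_weighted C g ξ.1 _ rfl c
  -- The Yoneda lemma: `C(F(i(a,b)), c) = H(c)(a,b)` for adjoint `F ⊣ H`.
  have hyo : ∀ (F : GIdT A B → C.carrier) (H : C.carrier → GIdT A B),
      (∀ (ξ : GIdT A B) (c : C.carrier),
          C.hom (F ξ) c = ⨅ a, ⨅ b, qhom (ξ.1 a b) ((H c).1 a b)) →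
      ∀ (a : A.carrier) (b : B.carrier) (ξ : GIdT A B), ξ.1 = iTensor A B a b →
        ∀ c, C.hom (F ξ) c = (H c).1 a b := by
    intro F H hFH a b ξ hξ c
    rw [hFH, hξ]
    exact tHom_iTensor a b (H c).2
  refine ⟨h1, fun a b ξ hξ => ?_, fun F H hFH k hk => ?_, fun F H hFH hFg => ?_⟩
  · exact eq_of_hom_eq C fun c =>
      hyo f (fun c => ⟨_, isGIdeal_of_isBimorphism hg c⟩) h1 a b ξ hξ c
  · refine isBimorphism_of_isGIdeal fun c => ?_
    have hkH : (fun a b => C.hom (k a b) c) = (H c).1 := by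
      funext a b
      rw [hk a b ⟨_, isGIdeal_iTensor A B a b⟩ rfl]
      exact hyo F H hFH a b _ rfl c
    rw [hkH]
    exact (H c).2
  · funext ξ
    refine eq_of_hom_eq C fun c => ?_
    rw [hFH, h1]
    refine iInf_congr fun a => iInf_congr fun b => ?_
    rw [← hFg a b ⟨_, isGIdeal_iTensor A B a b⟩ rfl]
    exact congrArg _ (hyo F H hFH a b ⟨_, isGIdeal_iTensor A B a b⟩ rfl c).symm
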